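/- Let θ = (𝕋, 𝕆, μ₁) and θ̂ = (𝕋̂, 𝕆̂, μ̂₁) be two POMDP parameter triples with S ≤ O such that every 𝕆_h has full column rank and σ_min(𝕆̂_h) ≥ α > 0 for every h ∈ [H]. Let π be a deterministic policy, and for τ_H ∈ Γ(π, H) let p(τ_H; θ) denote the conditional probability of the observation sequence of τ_H given its action sequence under θ. Then Σ_{τ_H ∈ Γ(π,H)} |p(τ_H; θ̂) − p(τ_H; θ)| ≤ (√S/α) ( ‖b₀(θ̂) − b₀(θ)‖₁ + Σ_{(a,o) ∈ 𝒜×𝒪} ‖(B₁(a, o; θ̂) − B₁(a, o; θ)) b₀(θ)‖₁ + Σ_{h=2}^{H−1} Σ_{(a, ã, o) ∈ 𝒜²×𝒪} Σ_{s ∈ 𝒮} ‖(B_h(a, o; θ̂) − B_h(a, o; θ)) 𝕆_h 𝕋_{h−1}(ã) e_s‖₁ · Pr^π_θ(s_{h−1} = s) ). -/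

import Mathlib

open Matrix BigOperators
open scoped Classical

noncomputable section

/-- The entrywise ℓ¹-norm of a finite vector. -/
def l1norm {n : ℕ} (v : Fin n → ℝ) : ℝ := ∑ i, |v i|

/-- The Euclidean (ℓ²) norm of a finite vector. -/
def l2norm {n : ℕ} (v : Fin n → ℝ) : ℝ := Real.sqrt (∑ i, (v i) ^ 2)

/-- The smallest singular value of a matrix, i.e. the infimum of `‖M x‖₂`
over unit vectors `x`. -/
def sigmaMin {m n : ℕ} (M : Matrix (Fin m) (Fin n) ℝ) : ℝ :=
  sInf {r : ℝ | ∃ x : Fin n → ℝ, l2norm x = 1 ∧ r = l2norm (M.mulVec x)}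

/-- The Moore–Penrose pseudoinverse of a full-column-rank matrix:
`M† = (Mᵀ M)⁻¹ Mᵀ`. -/
def pinvFC {m n : ℕ} (M : Matrix (Fin m) (Fin n) ℝ) : Matrix (Fin n) (Fin m) ℝ :=
  (Mᵀ * M)⁻¹ * Mᵀ

/-- A POMDP parameter triple `θ = (𝕋, 𝕆, μ₁)`: column-stochastic transition
matrices `𝕋_h(a) ∈ ℝ^{S×S}` (entry `(s', s)` is `𝕋_h(s'|s,a)`), observation
matrices `𝕆_h ∈ ℝ^{O×S}` with probability-vector columns, and an initial
distribution `μ₁ ∈ ℝ^S`.  Steps are indexed by `ℕ` (1-based). -/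
structure POMDPParams (S A O : ℕ) where
  T : ℕ → Fin A → Matrix (Fin S) (Fin S) ℝ
  Ob : ℕ → Matrix (Fin O) (Fin S) ℝ
  mu1 : Fin S → ℝ
  T_nonneg : ∀ h a s' s, 0 ≤ T h a s' s
  T_colsum : ∀ h a s, ∑ s', T h a s' s = 1
  Ob_nonneg : ∀ h o s, 0 ≤ Ob h o s
  Ob_colsum : ∀ h s, ∑ o, Ob h o s = 1
  mu1_nonneg : ∀ s, 0 ≤ mu1 s
  mu1_sum : ∑ s, mu1 s = 1

namespace POMDPParams

variable {S A O : ℕ}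

/-- The observable operator `B_h(a, o; θ) = 𝕆_{h+1} 𝕋_h(a) diag(𝕆_h(o|·)) 𝕆_h†`. -/
def Bop (θ : POMDPParams S A O) (h : ℕ) (a : Fin A) (o : Fin O) :
    Matrix (Fin O) (Fin O) ℝ :=
  θ.Ob (h + 1) * θ.T h a * Matrix.diagonal (fun s => θ.Ob h o s) * pinvFC (θ.Ob h)

/-- The initial observable-operator vector `b₀(θ) = 𝕆₁ μ₁`. -/
def bvec0 (θ : POMDPParams S A O) : Fin O → ℝ := (θ.Ob 1).mulVec θ.mu1

/-- A length-`h` trajectory `τ_h = (a_h, o_h, …, a₁, o₁)` is encoded as a map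
`Fin h → Fin A × Fin O`, index `i` holding the pair `(a_{i+1}, o_{i+1})`. -/
abbrev Traj (A O h : ℕ) := Fin h → Fin A × Fin O

/-- The unnormalized belief
`b(τ_h; θ) = B_h(a_h, o_h; θ) ⋯ B₁(a₁, o₁; θ) b₀(θ)`. -/
def belief (θ : POMDPParams S A O) : (h : ℕ) → Traj A O h → Fin O → ℝ
  | 0, _ => θ.bvec0
  | h + 1, τ =>
      (θ.Bop (h + 1) (τ (Fin.last h)).1 (τ (Fin.last h)).2).mulVec
        (θ.belief h (fun i : Fin h => τ i.castSucc))

/-- `stateBelief θ h τ s = Pr_θ(o_h, …, o₁, s_{h+1} = s | a_h, …, a₁)`, the joint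
probability of the observations of `τ` together with reaching state `s` at step
`h+1`, given the actions of `τ`. -/
def stateBelief (θ : POMDPParams S A O) : (h : ℕ) → Traj A O h → Fin S → ℝ
  | 0, _ => θ.mu1
  | h + 1, τ =>
      (θ.T (h + 1) (τ (Fin.last h)).1).mulVec
        (fun s => θ.Ob (h + 1) (τ (Fin.last h)).2 s *
          θ.stateBelief h (fun i : Fin h => τ i.castSucc) s)

/-- The conditional trajectory probability
`p(τ_h; θ) = Pr_θ(o_h, …, o₁ | a_{h−1}, …, a₁)`
(the last action of `τ_h` is irrelevant). -/
def trajProb (θ : POMDPParams S A O) : (h : ℕ) → Traj A O h → ℝ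
  | 0, _ => 1
  | h + 1, τ =>
      ∑ s, θ.Ob (h + 1) (τ (Fin.last h)).2 s *
        θ.stateBelief h (fun i : Fin h => τ i.castSucc) s

end POMDPParams

/-- A deterministic policy: given the length-`n` past history (most recent pair
first corresponds to index `n-1`) and the current observation, produce the
action for step `n+1`. -/
def Policy (A O : ℕ) := ∀ n : ℕ, (Fin n → Fin A × Fin O) → Fin O → Fin A

/-- A trajectory is admissible for `π` (i.e. lies in `Γ(π, h)`) if each of its
actions is the one `π` assigns to the preceding history. -/
def IsAdm {A O : ℕ} (π : Policy A O) {h : ℕ} (τ : POMDPParams.Traj A O h) : Prop :=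
  ∀ j : Fin h, (τ j).1 = π j.val (fun i : Fin j.val => τ (Fin.castLE j.isLt.le i)) (τ j).2

/-- `Γ(π, h)`: the finite set of length-`h` trajectories admissible for `π`. -/
noncomputable def GammaF {A O : ℕ} (π : Policy A O) (h : ℕ) :
    Finset (POMDPParams.Traj A O h) :=
  Finset.univ.filter (fun τ => IsAdm π τ)

/-- The state visitation probability `Pr^π_θ(s_h = s)` (for `h ≥ 1`). -/
noncomputable def visitProb {S A O : ℕ} (θ : POMDPParams S A O) (π : Policy A O)
    (h : ℕ) (s : Fin S) : ℝ :=
  ∑ τ ∈ GammaF π (h - 1), θ.stateBelief (h - 1) τ s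

/-- The trajectory induced by a deterministic policy `π` on an observation
sequence: actions are filled in by `π`. -/
def trajOf {A O : ℕ} (π : Policy A O) : (h : ℕ) → (Fin h → Fin O) → POMDPParams.Traj A O h
  | 0, _ => Fin.elim0
  | h + 1, ω =>
      Fin.snoc (trajOf π h (fun i : Fin h => ω i.castSucc))
        (π h (trajOf π h (fun i : Fin h => ω i.castSucc)) (ω (Fin.last h)), ω (Fin.last h))

end
theorem l1norm_nonneg {n : ℕ} (v : Fin n → ℝ) : 0 ≤ l1norm v :=
  Finset.sum_nonneg fun _ _ => abs_nonneg _

theorem l1norm_add_le {n : ℕ} (v w : Fin n → ℝ) : l1norm (v + w) ≤ l1norm v + l1norm w := by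
  unfold l1norm
  rw [← Finset.sum_add_distrib]
  exact Finset.sum_le_sum fun i _ => abs_add_le _ _

theorem l1norm_mulVec_le_sum {m n : ℕ} (M : Matrix (Fin m) (Fin n) ℝ) (v : Fin n → ℝ) :
    l1norm (M.mulVec v) ≤ ∑ s, l1norm (fun i => M i s) * |v s| := by
  simp only [l1norm, Finset.sum_mul]
  rw [Finset.sum_comm]
  refine Finset.sum_le_sum fun i _ => ?_
  simp only [Matrix.mulVec, dotProduct]
  refine (Finset.abs_sum_le_sum_abs _ _).trans_eq ?_
  simp [abs_mul]

/-- A column-stochastic matrix is a contraction for the `ℓ¹`-norm. -/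
theorem l1norm_mulVec_le {m n : ℕ} (M : Matrix (Fin m) (Fin n) ℝ) (h0 : ∀ i s, 0 ≤ M i s)
    (h1 : ∀ s, ∑ i, M i s = 1) (v : Fin n → ℝ) : l1norm (M.mulVec v) ≤ l1norm v := by
  refine (l1norm_mulVec_le_sum M v).trans_eq ?_
  refine Finset.sum_congr rfl fun s _ => ?_
  simp [l1norm, abs_of_nonneg (h0 _ s), h1]

theorem l2norm_nonneg {n : ℕ} (v : Fin n → ℝ) : 0 ≤ l2norm v := Real.sqrt_nonneg _

theorem l2norm_sq {n : ℕ} (v : Fin n → ℝ) : l2norm v ^ 2 = v ⬝ᵥ v := by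
  rw [l2norm, Real.sq_sqrt (Finset.sum_nonneg fun _ _ => sq_nonneg _)]
  simp [dotProduct, sq]

theorem l2norm_smul {n : ℕ} (c : ℝ) (v : Fin n → ℝ) : l2norm (c • v) = |c| * l2norm v := by
  simp only [l2norm, Pi.smul_apply, smul_eq_mul, mul_pow, ← Finset.mul_sum]
  rw [Real.sqrt_mul (sq_nonneg c), Real.sqrt_sq_eq_abs]

theorem eq_zero_of_l2norm_eq_zero {n : ℕ} {v : Fin n → ℝ} (h : l2norm v = 0) : v = 0 := by
  have h2 := l2norm_sq v
  rw [h] at h2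
  exact dotProduct_self_eq_zero.mp (by simpa using h2.symm)

theorem dotProduct_le_l2norm_mul {n : ℕ} (v w : Fin n → ℝ) : v ⬝ᵥ w ≤ l2norm v * l2norm w :=
  Real.sum_mul_le_sqrt_mul_sqrt _ _ _

theorem l2norm_le_l1norm {n : ℕ} (v : Fin n → ℝ) : l2norm v ≤ l1norm v := by
  refine Real.sqrt_le_iff.mpr ⟨l1norm_nonneg v, ?_⟩
  have h := Finset.sum_sq_le_sq_sum_of_nonneg (s := Finset.univ) (f := fun i => |v i|)
    fun _ _ => abs_nonneg _
  simpa [l1norm] using h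

theorem l1norm_le_sqrt_mul_l2norm {n : ℕ} (v : Fin n → ℝ) :
    l1norm v ≤ Real.sqrt n * l2norm v := by
  rw [l2norm, ← Real.sqrt_mul (Nat.cast_nonneg n)]
  refine Real.le_sqrt_of_sq_le ?_
  have h := sq_sum_le_card_mul_sum_sq (s := Finset.univ) (f := fun i => |v i|)
  simpa [l1norm] using h

theorem mul_l2norm_le_of_le_sigmaMin {m n : ℕ} {M : Matrix (Fin m) (Fin n) ℝ} {α : ℝ}
    (hM : α ≤ sigmaMin M) (x : Fin n → ℝ) : α * l2norm x ≤ l2norm (M.mulVec x) := by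
  rcases eq_or_ne (l2norm x) 0 with h | h
  · rw [h, mul_zero]; exact l2norm_nonneg _
  have hpos : 0 < l2norm x := lt_of_le_of_ne (l2norm_nonneg x) h.symm
  have key : sigmaMin M ≤ (l2norm x)⁻¹ * l2norm (M.mulVec x) := by
    refine csInf_le ⟨0, ?_⟩ ⟨(l2norm x)⁻¹ • x, ?_, ?_⟩
    · rintro _ ⟨y, -, rfl⟩
      exact l2norm_nonneg _
    · rw [l2norm_smul, abs_of_pos (inv_pos.mpr hpos), inv_mul_cancel₀ h]
    · rw [Matrix.mulVec_smul, l2norm_smul, abs_of_pos (inv_pos.mpr hpos)]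
  have := hM.trans key
  rwa [inv_mul_eq_div, le_div_iff₀ hpos] at this

theorem isUnit_det_gram {m n : ℕ} {M : Matrix (Fin m) (Fin n) ℝ} {α : ℝ} (hα : 0 < α)
    (hM : α ≤ sigmaMin M) : IsUnit (Mᵀ * M).det := by
  rw [← Matrix.isUnit_iff_isUnit_det, ← Matrix.mulVec_injective_iff_isUnit,
    ← Matrix.coe_mulVecLin, ← LinearMap.ker_eq_bot, LinearMap.ker_eq_bot']
  intro x hx
  rw [Matrix.mulVecLin_apply] at hx
  have h0 : l2norm (M.mulVec x) ^ 2 = 0 := by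
    rw [l2norm_sq, Matrix.dotProduct_mulVec, ← Matrix.mulVec_transpose, Matrix.mulVec_mulVec, hx,
      zero_dotProduct]
  have h1 := mul_l2norm_le_of_le_sigmaMin hM x
  rw [pow_eq_zero_iff two_ne_zero] at h0
  refine eq_zero_of_l2norm_eq_zero (le_antisymm ?_ (l2norm_nonneg x))
  nlinarith

theorem pinvFC_mul_self {m n : ℕ} {M : Matrix (Fin m) (Fin n) ℝ} (h : IsUnit (Mᵀ * M).det) :
    pinvFC M * M = 1 := by
  rw [pinvFC, Matrix.mul_assoc, Matrix.nonsing_inv_mul _ h]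

theorem l2norm_pinvFC_mulVec_le {m n : ℕ} {M : Matrix (Fin m) (Fin n) ℝ} {α : ℝ} (hα : 0 < α)
    (hM : α ≤ sigmaMin M) (x : Fin m → ℝ) : α * l2norm ((pinvFC M).mulVec x) ≤ l2norm x := by
  refine (mul_l2norm_le_of_le_sigmaMin hM _).trans ?_
  set y := (pinvFC M).mulVec x with hy
  have hnormal : Mᵀ.mulVec (M.mulVec y) = Mᵀ.mulVec x := by
    rw [hy, pinvFC, Matrix.mulVec_mulVec, Matrix.mulVec_mulVec, ← Matrix.mul_assoc,
      Matrix.mul_nonsing_inv _ (isUnit_det_gram hα hM), Matrix.one_mul]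
  have h : l2norm (M.mulVec y) ^ 2 ≤ l2norm (M.mulVec y) * l2norm x := by
    have h2 : M.mulVec y ⬝ᵥ M.mulVec y = M.mulVec y ⬝ᵥ x := by
      have e : ∀ z, M.mulVec y ⬝ᵥ z = y ⬝ᵥ Mᵀ.mulVec z := fun z => by
        rw [Matrix.dotProduct_mulVec, Matrix.vecMul_transpose]
      rw [e, e, hnormal]
    rw [l2norm_sq, h2]
    exact dotProduct_le_l2norm_mul _ _
  by_contra! hlt
  nlinarith [l2norm_nonneg x]

theorem l1norm_pinvFC_mulVec_le {m n : ℕ} {M : Matrix (Fin m) (Fin n) ℝ} {α : ℝ} (hα : 0 < α)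
    (hM : α ≤ sigmaMin M) (x : Fin m → ℝ) :
    l1norm ((pinvFC M).mulVec x) ≤ Real.sqrt n / α * l1norm x := by
  have h1 := l1norm_le_sqrt_mul_l2norm ((pinvFC M).mulVec x)
  have h2 := (l2norm_pinvFC_mulVec_le hα hM x).trans (l2norm_le_l1norm x)
  calc _ ≤ _ := h1
    _ ≤ Real.sqrt n * (l1norm x / α) := by
      gcongr
      rwa [le_div_iff₀ hα, mul_comm]
    _ = _ := by ring

theorem one_le_sqrt_div {m n : ℕ} {M : Matrix (Fin m) (Fin n) ℝ} {α : ℝ} (hα : 0 < α)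
    (hM : α ≤ sigmaMin M) (h0 : ∀ i s, 0 ≤ M i s) (h1 : ∀ s, ∑ i, M i s = 1) (hn : 0 < n) :
    1 ≤ Real.sqrt n / α := by
  rw [le_div_iff₀ hα, one_mul]
  have hα1 : α ≤ 1 := by
    let e : Fin n → ℝ := Pi.single ⟨0, hn⟩ 1
    have he1 : l1norm e = 1 := by simp [l1norm, e, Pi.single_apply, apply_ite abs]
    have he2 : l2norm e = 1 := by simp [l2norm, e, Pi.single_apply]
    have h := mul_l2norm_le_of_le_sigmaMin hM e
    rw [he2, mul_one] at h
    exact h.trans ((l2norm_le_l1norm _).trans ((l1norm_mulVec_le M h0 h1 e).trans_eq he1))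
  exact hα1.trans (Real.one_le_sqrt.mpr (by exact_mod_cast hn))

/-- The action chosen by `π` after the history `τ` and the current observation `o`. -/
def Policy.act {A O : ℕ} (π : Policy A O) {h : ℕ} (τ : POMDPParams.Traj A O h) (o : Fin O) :
    Fin A :=
  π h τ o

theorem isAdm_snoc {A O : ℕ} (π : Policy A O) {h : ℕ} (τ : POMDPParams.Traj A O h)
    (x : Fin A × Fin O) :
    IsAdm π (Fin.snoc τ x : POMDPParams.Traj A O (h + 1)) ↔ IsAdm π τ ∧ x.1 = π.act τ x.2 := by
  unfold IsAdm
  rw [Fin.forall_fin_succ']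
  have hcast : ∀ (j : Fin h) (i : Fin j.val),
      (Fin.snoc τ x : POMDPParams.Traj A O (h + 1)) (Fin.castLE (Nat.le_succ_of_le j.isLt.le) i)
        = τ (Fin.castLE j.isLt.le i) := fun j i =>
    Fin.snoc_castSucc (α := fun _ => Fin A × Fin O) (x := x) (p := τ) (Fin.castLE j.isLt.le i)
  have hlast : (fun i : Fin h => (Fin.snoc τ x : POMDPParams.Traj A O (h + 1))
      (Fin.castLE (Nat.le_succ h) i)) = τ := funext fun i =>
    Fin.snoc_castSucc (α := fun _ => Fin A × Fin O) (x := x) (p := τ) i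
  refine and_congr (forall_congr' fun j => ?_) ?_
  · rw [Fin.snoc_castSucc (α := fun _ => Fin A × Fin O), ← funext (hcast j)]
    rfl
  · rw [Fin.snoc_last (α := fun _ => Fin A × Fin O)]
    exact Eq.congr_right (congrArg (π.act · x.2) hlast)

theorem sum_GammaF_succ {A O : ℕ} (π : Policy A O) (h : ℕ)
    (f : POMDPParams.Traj A O (h + 1) → ℝ) :
    ∑ τ ∈ GammaF π (h + 1), f τ
      = ∑ τ ∈ GammaF π h, ∑ o, f (Fin.snoc τ (π.act τ o, o)) := by
  simp only [GammaF, Finset.sum_filter]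
  rw [← (Fin.snocEquiv fun _ => Fin A × Fin O).sum_comp, Fintype.sum_prod_type_right]
  refine Finset.sum_congr rfl fun τ _ => ?_
  rw [Fintype.sum_prod_type_right]
  have key : ∀ x : Fin A × Fin O, (if IsAdm π (Fin.snocEquiv (fun _ => Fin A × Fin O) (x, τ)) then
      f (Fin.snocEquiv (fun _ => Fin A × Fin O) (x, τ)) else 0)
        = if IsAdm π τ ∧ x.1 = π.act τ x.2 then f (Fin.snoc τ x) else 0 := fun x =>
    if_congr (isAdm_snoc π τ x) rfl rfl
  simp only [key]
  by_cases hτ : IsAdm π τ <;> simp [hτ]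

theorem GammaF_zero {A O : ℕ} (π : Policy A O) : GammaF π 0 = Finset.univ :=
  Finset.filter_true_of_mem fun _ _ j => j.elim0

namespace POMDPParams

variable {S A O : ℕ}

theorem stateBelief_snoc (θ : POMDPParams S A O) (h : ℕ) (τ : Traj A O h) (x : Fin A × Fin O) :
    θ.stateBelief (h + 1) (Fin.snoc τ x)
      = (θ.T (h + 1) x.1).mulVec (fun s => θ.Ob (h + 1) x.2 s * θ.stateBelief h τ s) := by
  simp only [stateBelief, Fin.snoc_last, Fin.snoc_castSucc]

theorem trajProb_snoc (θ : POMDPParams S A O) (h : ℕ) (τ : Traj A O h) (x : Fin A × Fin O) :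
    θ.trajProb (h + 1) (Fin.snoc τ x)
      = (θ.Ob (h + 1)).mulVec (θ.stateBelief h τ) x.2 := by
  simp only [trajProb, Fin.snoc_last, Fin.snoc_castSucc, Matrix.mulVec, dotProduct]

theorem stateBelief_nonneg (θ : POMDPParams S A O) (h : ℕ) (τ : Traj A O h) (s : Fin S) :
    0 ≤ θ.stateBelief h τ s := by
  induction h generalizing s with
  | zero => exact θ.mu1_nonneg s
  | succ h ih =>
    simp only [stateBelief, Matrix.mulVec, dotProduct]
    exact Finset.sum_nonneg fun s' _ =>
      mul_nonneg (θ.T_nonneg ..) (mul_nonneg (θ.Ob_nonneg ..) (ih _ _))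

theorem states_pos (θ : POMDPParams S A O) : 0 < S := by
  rcases Nat.eq_zero_or_pos S with rfl | h
  · simpa using θ.mu1_sum
  · exact h

theorem Bop_mulVec (θ : POMDPParams S A O) (h : ℕ) (a : Fin A) (o : Fin O) (x : Fin O → ℝ) :
    (θ.Bop h a o).mulVec x = (θ.Ob (h + 1)).mulVec ((θ.T h a).mulVec
      (fun s => θ.Ob h o s * (pinvFC (θ.Ob h)).mulVec x s)) := by
  simp only [Bop, ← Matrix.mulVec_mulVec]
  congr 2
  ext s
  rw [Matrix.mulVec_diagonal]

theorem sum_l1norm_Ob_mul (θ : POMDPParams S A O) (h : ℕ) (z : Fin S → ℝ) :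
    ∑ o, l1norm (fun s => θ.Ob h o s * z s) = l1norm z := by
  unfold l1norm
  rw [Finset.sum_comm]
  refine Finset.sum_congr rfl fun s _ => ?_
  simp only [abs_mul, abs_of_nonneg (θ.Ob_nonneg h _ s), ← Finset.sum_mul, θ.Ob_colsum, one_mul]

theorem sum_l1norm_T_mulVec_le (θ : POMDPParams S A O) (h : ℕ) (a : Fin O → Fin A)
    (z : Fin S → ℝ) :
    ∑ o, l1norm ((θ.T h (a o)).mulVec (fun s => θ.Ob h o s * z s)) ≤ l1norm z := by
  rw [← θ.sum_l1norm_Ob_mul h z]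
  exact Finset.sum_le_sum fun o _ =>
    l1norm_mulVec_le _ (θ.T_nonneg h _) (θ.T_colsum h _) _

/-- The vector of conditional probabilities of the next observation jointly with those of `τ`. -/
def obsBelief (θ : POMDPParams S A O) (h : ℕ) (τ : Traj A O h) : Fin O → ℝ :=
  (θ.Ob (h + 1)).mulVec (θ.stateBelief h τ)

theorem obsBelief_snoc (θ : POMDPParams S A O) {h : ℕ}
    (hfc : pinvFC (θ.Ob (h + 1)) * θ.Ob (h + 1) = 1) (τ : Traj A O h) (x : Fin A × Fin O) :
    θ.obsBelief (h + 1) (Fin.snoc τ x)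
      = (θ.Bop (h + 1) x.1 x.2).mulVec (θ.obsBelief h τ) := by
  rw [Bop_mulVec, obsBelief, obsBelief, stateBelief_snoc, Matrix.mulVec_mulVec _ (pinvFC _), hfc,
    Matrix.one_mulVec]

/-- The total operator error at step `h + 1`, along the trajectories of `π` under `θ`. -/
noncomputable def operatorError (θ θh : POMDPParams S A O) (π : Policy A O) (h : ℕ) : ℝ :=
  ∑ τ ∈ GammaF π h, ∑ o,
    l1norm ((θh.Bop (h + 1) (π.act τ o) o - θ.Bop (h + 1) (π.act τ o) o).mulVec (θ.obsBelief h τ))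

theorem operatorError_nonneg (θ θh : POMDPParams S A O) (π : Policy A O) (h : ℕ) :
    0 ≤ operatorError θ θh π h :=
  Finset.sum_nonneg fun _ _ => Finset.sum_nonneg fun _ _ => l1norm_nonneg _

theorem obsBelief_sub_snoc (θ θh : POMDPParams S A O)
    (hfc : ∀ j, pinvFC (θ.Ob j) * θ.Ob j = 1) (hfch : ∀ j, pinvFC (θh.Ob j) * θh.Ob j = 1)
    (h : ℕ) (τ : Traj A O h) (x : Fin A × Fin O) :
    θh.obsBelief (h + 1) (Fin.snoc τ x) - θ.obsBelief (h + 1) (Fin.snoc τ x)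
      = (θh.Bop (h + 1) x.1 x.2).mulVec (θh.obsBelief h τ - θ.obsBelief h τ)
        + (θh.Bop (h + 1) x.1 x.2 - θ.Bop (h + 1) x.1 x.2).mulVec (θ.obsBelief h τ) := by
  rw [obsBelief_snoc _ (hfc _), obsBelief_snoc _ (hfch _), Matrix.mulVec_sub, Matrix.sub_mulVec]
  abel

theorem obsBelief_zero_sub (θ θh : POMDPParams S A O) (τ : Traj A O 0) :
    θh.obsBelief 0 τ - θ.obsBelief 0 τ = θh.bvec0 - θ.bvec0 := rfl

theorem sum_l1norm_pinvFC_mulVec_obsBelief_sub_le (θ θh : POMDPParams S A O) {α : ℝ} (hα : 0 < α)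
    (hfc : ∀ j, pinvFC (θ.Ob j) * θ.Ob j = 1) (hσ : ∀ j, α ≤ sigmaMin (θh.Ob j))
    (π : Policy A O) (n : ℕ) :
    ∑ τ ∈ GammaF π n, l1norm ((pinvFC (θh.Ob (n + 1))).mulVec
        (θh.obsBelief n τ - θ.obsBelief n τ))
      ≤ Real.sqrt S / α * (l1norm (θh.bvec0 - θ.bvec0)
          + ∑ k ∈ Finset.range n, operatorError θ θh π k) := by
  have hfch : ∀ j, pinvFC (θh.Ob j) * θh.Ob j = 1 := fun j =>
    pinvFC_mul_self (isUnit_det_gram hα (hσ j))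
  induction n with
  | zero =>
    simp only [GammaF_zero, obsBelief_zero_sub]
    simpa using l1norm_pinvFC_mulVec_le hα (hσ 1) (θh.bvec0 - θ.bvec0)
  | succ n ih =>
    rw [Finset.sum_range_succ, ← add_assoc, mul_add]
    refine le_trans ?_ (add_le_add_left ih _)
    rw [sum_GammaF_succ, operatorError, Finset.mul_sum, ← Finset.sum_add_distrib]
    refine Finset.sum_le_sum fun τ _ => ?_
    refine le_trans ?_ (add_le_add_left (θh.sum_l1norm_T_mulVec_le (n + 1) (π.act τ) _) _)
    rw [Finset.mul_sum, ← Finset.sum_add_distrib]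
    refine Finset.sum_le_sum fun o _ => ?_
    rw [obsBelief_sub_snoc θ θh hfc hfch, Matrix.mulVec_add, Bop_mulVec,
      Matrix.mulVec_mulVec _ (pinvFC _), hfch, Matrix.one_mulVec]
    exact (l1norm_add_le _ _).trans
      (add_le_add_right (l1norm_pinvFC_mulVec_le hα (hσ _) _) _)

theorem sum_l1norm_obsBelief_sub_le (θ θh : POMDPParams S A O) {α : ℝ} (hα : 0 < α)
    (hfc : ∀ j, pinvFC (θ.Ob j) * θ.Ob j = 1) (hσ : ∀ j, α ≤ sigmaMin (θh.Ob j))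
    (π : Policy A O) (n : ℕ) :
    ∑ τ ∈ GammaF π n, l1norm (θh.obsBelief n τ - θ.obsBelief n τ)
      ≤ Real.sqrt S / α * (l1norm (θh.bvec0 - θ.bvec0)
          + ∑ k ∈ Finset.range n, operatorError θ θh π k) := by
  have hfch : ∀ j, pinvFC (θh.Ob j) * θh.Ob j = 1 := fun j =>
    pinvFC_mul_self (isUnit_det_gram hα (hσ j))
  have hC : 1 ≤ Real.sqrt S / α :=
    one_le_sqrt_div hα (hσ 0) (θh.Ob_nonneg 0) (θh.Ob_colsum 0) θ.states_pos
  cases n with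
  | zero =>
    simp only [GammaF_zero, obsBelief_zero_sub]
    simpa using le_mul_of_one_le_left (l1norm_nonneg (θh.bvec0 - θ.bvec0)) hC
  | succ n =>
    rw [Finset.sum_range_succ, ← add_assoc, mul_add]
    refine le_trans ?_ (add_le_add
      (sum_l1norm_pinvFC_mulVec_obsBelief_sub_le θ θh hα hfc hσ π n)
      (le_mul_of_one_le_left (operatorError_nonneg θ θh π n) hC))
    rw [sum_GammaF_succ, operatorError, ← Finset.sum_add_distrib]
    refine Finset.sum_le_sum fun τ _ => ?_
    refine le_trans ?_ (add_le_add_left (θh.sum_l1norm_T_mulVec_le (n + 1) (π.act τ) _) _)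
    rw [← Finset.sum_add_distrib]
    refine Finset.sum_le_sum fun o _ => ?_
    rw [obsBelief_sub_snoc θ θh hfc hfch, Bop_mulVec]
    exact (l1norm_add_le _ _).trans (add_le_add_left
      (l1norm_mulVec_le _ (θh.Ob_nonneg _) (θh.Ob_colsum _) _) _)

theorem sum_abs_trajProb_sub (θ θh : POMDPParams S A O) (π : Policy A O) (n : ℕ) :
    ∑ τ ∈ GammaF π (n + 1), |θh.trajProb (n + 1) τ - θ.trajProb (n + 1) τ|
      = ∑ τ ∈ GammaF π n, l1norm (θh.obsBelief n τ - θ.obsBelief n τ) := by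
  rw [sum_GammaF_succ]
  simp only [trajProb_snoc, l1norm, obsBelief, Pi.sub_apply]

theorem operatorError_zero_le (θ θh : POMDPParams S A O) (π : Policy A O) :
    operatorError θ θh π 0 ≤ ∑ a : Fin A, ∑ o : Fin O,
      l1norm ((θh.Bop 1 a o - θ.Bop 1 a o).mulVec θ.bvec0) := by
  rw [operatorError, GammaF_zero, Fintype.sum_unique, Finset.sum_comm]
  exact Finset.sum_le_sum fun o _ => Finset.single_le_sum
    (f := fun a => l1norm ((θh.Bop 1 a o - θ.Bop 1 a o).mulVec θ.bvec0))
    (fun a _ => l1norm_nonneg _) (Finset.mem_univ _)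

theorem sum_mul_stateBelief_le_sum_mul_visitProb (θ : POMDPParams S A O) (π : Policy A O) (h : ℕ)
    (F : Fin A → Fin A → Fin O → Fin S → ℝ) (hF : ∀ a a' o s, 0 ≤ F a a' o s)
    (act : Traj A O h → Fin O → Fin A) (act' : Traj A O h → Fin O → Fin O → Fin A) :
    ∑ τ ∈ GammaF π h, ∑ o', ∑ o, ∑ s,
        F (act' τ o' o) (act τ o') o s * (θ.Ob (h + 1) o' s * θ.stateBelief h τ s)
      ≤ ∑ a, ∑ a', ∑ o, ∑ s, F a a' o s * visitProb θ π (h + 1) s := by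
  have hFG : ∀ (b : Fin O → Fin A) a' s, ∑ o, F (b o) a' o s ≤ ∑ a, ∑ a', ∑ o, F a a' o s := by
    intro b a' s
    calc ∑ o, F (b o) a' o s ≤ ∑ o, ∑ a, F a a' o s := Finset.sum_le_sum fun o _ =>
          Finset.single_le_sum (f := fun a => F a a' o s) (fun _ _ => hF ..) (Finset.mem_univ _)
      _ = ∑ a, ∑ o, F a a' o s := Finset.sum_comm
      _ ≤ ∑ a, ∑ a', ∑ o, F a a' o s := Finset.sum_le_sum fun a _ =>
          Finset.single_le_sum (f := fun a' => ∑ o, F a a' o s)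
            (fun _ _ => Finset.sum_nonneg fun _ _ => hF ..) (Finset.mem_univ _)
  have hvisit : ∀ s, visitProb θ π (h + 1) s = ∑ τ ∈ GammaF π h, θ.stateBelief h τ s :=
    fun _ => rfl
  calc _ ≤ ∑ τ ∈ GammaF π h, ∑ o', ∑ s,
        (∑ a, ∑ a', ∑ o, F a a' o s) * (θ.Ob (h + 1) o' s * θ.stateBelief h τ s) := by
        refine Finset.sum_le_sum fun τ _ => Finset.sum_le_sum fun o' _ => ?_
        rw [Finset.sum_comm]
        refine Finset.sum_le_sum fun s _ => ?_
        rw [← Finset.sum_mul]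
        exact mul_le_mul_of_nonneg_right (hFG _ _ s)
          (mul_nonneg (θ.Ob_nonneg ..) (θ.stateBelief_nonneg ..))
    _ = ∑ τ ∈ GammaF π h, ∑ s, (∑ a, ∑ a', ∑ o, F a a' o s) * θ.stateBelief h τ s := by
        refine Finset.sum_congr rfl fun τ _ => ?_
        rw [Finset.sum_comm]
        refine Finset.sum_congr rfl fun s _ => ?_
        rw [← Finset.mul_sum, ← Finset.sum_mul, θ.Ob_colsum, one_mul]
    _ = ∑ s, (∑ a, ∑ a', ∑ o, F a a' o s) * visitProb θ π (h + 1) s := by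
        rw [Finset.sum_comm]
        simp only [← Finset.mul_sum, hvisit]
    _ = ∑ a, ∑ a', ∑ o, ∑ s, F a a' o s * visitProb θ π (h + 1) s := by
        simp only [Finset.sum_mul]
        rw [Finset.sum_comm]
        refine Finset.sum_congr rfl fun a _ => ?_
        rw [Finset.sum_comm]
        exact Finset.sum_congr rfl fun a' _ => Finset.sum_comm

theorem l1norm_mulVec_obsBelief_snoc_le (θ : POMDPParams S A O) {m : ℕ}
    (M : Matrix (Fin m) (Fin O) ℝ) (h : ℕ) (τ : Traj A O h) (x : Fin A × Fin O) :
    l1norm (M.mulVec (θ.obsBelief (h + 1) (Fin.snoc τ x)))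
      ≤ ∑ s, l1norm (M.mulVec (fun i => (θ.Ob (h + 2) * θ.T (h + 1) x.1) i s)) *
          (θ.Ob (h + 1) x.2 s * θ.stateBelief h τ s) := by
  rw [obsBelief, stateBelief_snoc, Matrix.mulVec_mulVec _ (θ.Ob _), Matrix.mulVec_mulVec]
  refine (l1norm_mulVec_le_sum _ _).trans_eq (Finset.sum_congr rfl fun s _ => ?_)
  rw [abs_of_nonneg (mul_nonneg (θ.Ob_nonneg ..) (θ.stateBelief_nonneg ..))]
  rfl

theorem operatorError_succ_le (θ θh : POMDPParams S A O) (π : Policy A O) (h : ℕ) :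
    operatorError θ θh π (h + 1)
      ≤ ∑ a : Fin A, ∑ a' : Fin A, ∑ o : Fin O, ∑ s : Fin S,
          l1norm ((θh.Bop (h + 2) a o - θ.Bop (h + 2) a o).mulVec
            (fun i => (θ.Ob (h + 2) * θ.T (h + 1) a') i s)) * visitProb θ π (h + 1) s := by
  rw [operatorError, sum_GammaF_succ]
  refine le_trans ?_ (θ.sum_mul_stateBelief_le_sum_mul_visitProb π h
    (fun a a' o s => l1norm ((θh.Bop (h + 2) a o - θ.Bop (h + 2) a o).mulVec
      (fun i => (θ.Ob (h + 2) * θ.T (h + 1) a') i s))) (fun _ _ _ _ => l1norm_nonneg _)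
    π.act (fun τ o' o => π.act (h := h + 1) (Fin.snoc τ (π.act τ o', o')) o))
  exact Finset.sum_le_sum fun τ _ => Finset.sum_le_sum fun o' _ => Finset.sum_le_sum fun o _ =>
    θ.l1norm_mulVec_obsBelief_snoc_le _ h τ (π.act τ o', o')

end POMDPParams

/-- Lemma `p_bound`: the total density-estimation error over
admissible length-`H` trajectories is bounded by errors in `b₀` and in the
observable operators, reweighted by state visitation probabilities. -/
theorem density_error_le_operator_error {S A O : ℕ} (hSO : S ≤ O)
    (α : ℝ) (hα : 0 < α) (θ θh : POMDPParams S A O)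
    (hfc : ∀ j : ℕ, pinvFC (θ.Ob j) * θ.Ob j = 1)
    (hσ : ∀ j : ℕ, α ≤ sigmaMin (θh.Ob j))
    (π : Policy A O) (H : ℕ) (hH : 1 ≤ H) :
    ∑ τ ∈ GammaF π H, |θh.trajProb H τ - θ.trajProb H τ|
      ≤ (Real.sqrt S / α) *
          (l1norm (θh.bvec0 - θ.bvec0)
            + (∑ a : Fin A, ∑ o : Fin O,
                l1norm ((θh.Bop 1 a o - θ.Bop 1 a o).mulVec θ.bvec0))
            + ∑ h ∈ Finset.Icc 2 (H - 1), ∑ a : Fin A, ∑ a' : Fin A, ∑ o : Fin O, ∑ s : Fin S,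
                l1norm ((θh.Bop h a o - θ.Bop h a o).mulVec
                    (fun i => (θ.Ob h * θ.T (h - 1) a') i s)) *
                  visitProb θ π (h - 1) s) := by
  obtain ⟨n, rfl⟩ := Nat.exists_eq_add_of_le' hH
  rw [POMDPParams.sum_abs_trajProb_sub]
  refine (POMDPParams.sum_l1norm_obsBelief_sub_le θ θh hα hfc hσ π n).trans ?_
  refine mul_le_mul_of_nonneg_left ?_ (by positivity)
  rw [add_assoc]
  refine add_le_add_right ?_ _
  rw [Nat.add_sub_cancel]
  induction n with
  | zero =>
    simpa using Finset.sum_nonneg fun _ _ => Finset.sum_nonneg fun _ _ => l1norm_nonneg _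
  | succ n ih =>
    rw [Finset.sum_range_succ]
    cases n with
    | zero => simpa using POMDPParams.operatorError_zero_le θ θh π
    | succ n =>
      rw [Finset.sum_Icc_succ_top (by lia), ← add_assoc]
      exact add_le_add (ih (by lia)) (POMDPParams.operatorError_succ_le θ θh π n)
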